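/- arXiv:2006.09608 — 2 statements merged into one kernel-verified Lean document; each statement's English description precedes it below -/
import Mathlib

section
/- T(I) is homotopy dense in cl T(I): there exists a continuous map H : cl T(I) × [0,1] → cl T(I) such that H(f,0) = f for every f ∈ cl T(I) and H(f,t) ∈ T(I) for every f ∈ cl T(I) and every t ∈ (0,1]. -/
/-!
The homotopy replaces `f`, at time `t > 0`, by a piecewise linear zigzag `F` around `f` of amplitude
about `t`, on a grid of `[0, 1]` with mesh `h`. At even grid points `F` is `f - 2 * t`, at odd ones
`f + 2 * t`, truncated to `[0, 1]`. The mesh is a quarter of `modulus f t`, a modulus of continuity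
of `f` at scale `t` which depends continuously on `(f, t)`. Hence the homotopy is continuous at
positive times, where locally only finitely many grid points matter, and it is continuous at time
`0` since `F` is uniformly `3 * t`-close to `f`.

The map `F` is transitive when `f ∈ cl T(I)` (`isTransitiveMap_of_laps`), for the following reasons.
* `F` has slope at least `4` on each lap `[q * h, (q + 1) * h]`, so the iterates of any nondegenerate
  interval grow until they contain a full lap (`exists_iterate_covers_lap`).
* The image of a lap contains the `t`-neighbourhood of `f x` for every `x` near the lap. So if `g` is
  `t / 2`-close to `f`, the orbit under `g` of a point of a lap is contained in the successive images
  of that lap under `F` (`iterate_mem_image_lap`).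
* Since `f ∈ cl T(I)`, such a `g` may be chosen transitive, and then some orbit under `g` leads from
  the given lap to any prescribed open set.
-/

open unitInterval

/-- A continuous self-map of the unit interval is (topologically) transitive if for every pair
of nonempty open sets `U, V ⊆ I` there is a positive integer `n` with `U ∩ f⁻ⁿ(V) ≠ ∅`. -/
def IsTransitiveMap (f : C(I, I)) : Prop :=
  ∀ U V : Set I, IsOpen U → IsOpen V → U.Nonempty → V.Nonempty →
    ∃ n : ℕ, 0 < n ∧ (U ∩ (f : I → I)^[n] ⁻¹' V).Nonempty

/-- `T(I)`: the set of transitive maps in `C(I, I)`. -/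
def TransSet : Set C(I, I) := {f | IsTransitiveMap f}

/-! ### A criterion for transitivity -/

/-- Every nondegenerate interval is eventually mapped over a whole lap, provided `F` expands lengths
by a factor `4` on each lap of the grid of mesh `h`. An interval containing no full lap has at
least half of its length inside one lap, so its image contains an interval twice as long. -/
theorem exists_iterate_covers_lap (F : C(I, I)) {h : ℝ} (hh : 0 < h) (h1 : h ≤ 1 / 4)
    (hexp : ∀ (q : ℕ) (x y : I), q * h ≤ x → x ≤ y → (y : ℝ) ≤ (q + 1) * h →
      4 * ((y : ℝ) - x) ≤ |(F y : ℝ) - F x|) (k : ℕ) :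
    ∀ a b : I, a < b → (1 / 2 : ℝ) ^ k ≤ b - a →
      ∃ (m q : ℕ) (c d : I), (c : ℝ) = q * h ∧ (d : ℝ) = (q + 1) * h ∧
        Set.Icc c d ⊆ (F : I → I)^[m] '' Set.Icc a b := by
  induction k with
  | zero =>
    intro a b _ hlen
    have ha := a.2.1
    have hb := b.2.2
    have ha0 : (a : ℝ) = 0 := by norm_num at hlen; linarith
    have hb1 : (b : ℝ) = 1 := by norm_num at hlen; linarith
    refine ⟨0, 0, 0, ⟨h, hh.le, by linarith⟩, by simp, by simp, ?_⟩
    intro z _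
    refine ⟨z, ⟨?_, ?_⟩, rfl⟩
    · rw [← Subtype.coe_le_coe, ha0]; exact z.2.1
    · rw [← Subtype.coe_le_coe, hb1]; exact z.2.2
  | succ k ih =>
    intro a b hab hlen
    have hab' : (a : ℝ) < b := hab
    -- It suffices to find a half-length subinterval inside a single lap.
    have key : ∀ (q : ℕ) (x y : I), a ≤ x → x ≤ y → y ≤ b → q * h ≤ x →
        (y : ℝ) ≤ (q + 1) * h → ((b : ℝ) - a) / 2 ≤ y - x →
        ∃ (m q : ℕ) (c d : I), (c : ℝ) = q * h ∧ (d : ℝ) = (q + 1) * h ∧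
          Set.Icc c d ⊆ (F : I → I)^[m] '' Set.Icc a b := by
      intro q x y hax hxy hyb hqx hqy hl
      have he := hexp q x y hqx hxy hqy
      have hiv : Set.uIcc (F x) (F y) ⊆ F '' Set.uIcc x y :=
        intermediate_value_uIcc F.continuous.continuousOn
      have hsub : Set.uIcc x y ⊆ Set.Icc a b := by
        rw [Set.uIcc_of_le hxy]; exact Set.Icc_subset_Icc hax hyb
      have hpow : (1 / 2 : ℝ) ^ (k + 1) = (1 / 2) ^ k / 2 := by ring
      have hlong : (1 / 2 : ℝ) ^ k ≤ |(F y : ℝ) - F x| := by linarith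
      have hmm : (((F x ⊔ F y : I) : ℝ) - (F x ⊓ F y : I)) = |(F y : ℝ) - F x| := by
        rcases le_total (F x) (F y) with hle | hle
        · rw [sup_eq_right.2 hle, inf_eq_left.2 hle, abs_of_nonneg]
          exact sub_nonneg.2 hle
        · rw [sup_eq_left.2 hle, inf_eq_right.2 hle, abs_of_nonpos, neg_sub]
          exact sub_nonpos.2 hle
      have hpos : (0 : ℝ) < (1 / 2) ^ k := by positivity
      obtain ⟨m, q', c, d, hc, hd, hcd⟩ := ih (F x ⊓ F y) (F x ⊔ F y)
        (by rw [← Subtype.coe_lt_coe]; linarith) (by linarith)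
      refine ⟨m + 1, q', c, d, hc, hd, hcd.trans ?_⟩
      rw [Function.iterate_succ, Set.image_comp]
      exact Set.image_mono (hiv.trans (Set.image_mono hsub))
    obtain ⟨q, hq1, hq2⟩ : ∃ q : ℕ, q * h ≤ a ∧ (a : ℝ) < (q + 1) * h := by
      refine ⟨⌊(a : ℝ) / h⌋₊, ?_, ?_⟩
      · exact (le_div_iff₀ hh).1 (Nat.floor_le (div_nonneg a.2.1 hh.le))
      · exact (div_lt_iff₀ hh).1 (Nat.lt_floor_add_one _)
    by_cases hb1 : (b : ℝ) ≤ (q + 1) * h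
    · exact key q a b le_rfl hab.le le_rfl hq1 hb1 (by linarith)
    push Not at hb1
    have hb := b.2.2
    have ha := a.2.1
    let e : I := ⟨(q + 1) * h, by linarith, by linarith⟩
    have hae : a ≤ e := hq2.le
    have heb : e ≤ b := hb1.le
    by_cases hb2 : ((q + 1 : ℕ) + 1) * h ≤ (b : ℝ)
    · refine ⟨0, q + 1, e, ⟨((q + 1 : ℕ) + 1) * h, by positivity, by linarith⟩,
        by simp [e], rfl, ?_⟩
      simp only [Function.iterate_zero, Set.image_id]
      exact Set.Icc_subset_Icc hae hb2
    push Not at hb2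
    rcases le_total (((b : ℝ) - a) / 2) ((e : ℝ) - a) with hl | hl
    · exact key q a e le_rfl hae heb hq1 le_rfl hl
    · exact key (q + 1) e b hae heb le_rfl (by simp [e]) hb2.le (by linarith)

/-- A point `x` is shadowed: if the laps of `F` cover the `ε`-neighbourhood of the values of `f`
nearby and `g` is `ε / 2`-close to `f`, then the `F`-iterates of a lap near `x` contain the
`g`-orbit of `x`. -/
theorem iterate_mem_image_lap (f F g : C(I, I)) {ε h : ℝ} (hh : 0 < h)
    (hε : h ≤ ε / 4) (h1 : h ≤ 1 / 4)
    (hcov : ∀ (q : ℕ) (a b x : I), (a : ℝ) = q * h → (b : ℝ) = (q + 1) * h →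
      |(x : ℝ) - a| ≤ 2 * h → |(x : ℝ) - b| ≤ 2 * h →
      ∀ z : I, |(z : ℝ) - f x| ≤ ε → z ∈ F '' Set.Icc a b)
    (hg : ∀ x, |(g x : ℝ) - f x| ≤ ε / 2) (n : ℕ) :
    ∀ (q : ℕ) (a b x : I), (a : ℝ) = q * h → (b : ℝ) = (q + 1) * h →
      |(x : ℝ) - a| ≤ 2 * h → |(x : ℝ) - b| ≤ 2 * h →
      (g : I → I)^[n + 1] x ∈ (F : I → I)^[n + 1] '' Set.Icc a b := by
  induction n with
  | zero =>
    intro q a b x ha hb hxa hxb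
    exact hcov q a b x ha hb hxa hxb _ ((hg x).trans (by linarith))
  | succ n ih =>
    intro q a b x ha hb hxa hxb
    -- A full lap `[c, d]` near `g x`: the one containing it, or the previous one if that is cut by 1.
    obtain ⟨p, c, d, hc, hd, hxc, hxd⟩ : ∃ (p : ℕ) (c d : I), (c : ℝ) = p * h ∧
        (d : ℝ) = (p + 1) * h ∧ |(g x : ℝ) - c| ≤ 2 * h ∧ |(g x : ℝ) - d| ≤ 2 * h := by
      have h0 := (g x).2.1
      have h1' := (g x).2.2
      obtain ⟨p, hp1, hp2⟩ : ∃ p : ℕ, p * h ≤ (g x : ℝ) ∧ (g x : ℝ) < (p + 1) * h :=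
        ⟨⌊(g x : ℝ) / h⌋₊, (le_div_iff₀ hh).1 (Nat.floor_le (div_nonneg h0 hh.le)),
          (div_lt_iff₀ hh).1 (Nat.lt_floor_add_one _)⟩
      by_cases hp : (p + 1) * h ≤ 1
      · refine ⟨p, ⟨p * h, by positivity, by linarith⟩, ⟨(p + 1) * h, by positivity, hp⟩,
          rfl, rfl, ?_, ?_⟩ <;> rw [abs_le] <;> constructor <;> simp only <;> nlinarith
      · obtain _ | p := p
        · exfalso; apply hp; simp; linarith
        · push_cast at hp hp1 hp2
          refine ⟨p, ⟨p * h, by positivity, by linarith⟩, ⟨(p + 1) * h, by positivity, by linarith⟩,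
            rfl, rfl, ?_, ?_⟩ <;> rw [abs_le] <;> constructor <;> simp only <;> linarith
    rw [Function.iterate_succ_apply, Function.iterate_succ, Set.image_comp]
    refine Set.image_mono ?_ (ih p c d (g x) hc hd hxc hxd)
    intro z hz
    apply hcov q a b x ha hb hxa hxb
    have hgx := abs_le.1 (hg x)
    have hz1 : (c : ℝ) ≤ z := hz.1
    have hz2 : (z : ℝ) ≤ d := hz.2
    have hxc' := abs_le.1 hxc
    have hxd' := abs_le.1 hxd
    rw [abs_le]
    constructor <;> linarith

/-- A map that expands on the laps of a grid, and whose laps cover the `ε`-neighbourhood of the nearby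
values of some `f ∈ cl T(I)`, is transitive. -/
theorem isTransitiveMap_of_laps (f F : C(I, I)) {ε h : ℝ} (hh : 0 < h)
    (hε : h ≤ ε / 4) (h1 : h ≤ 1 / 4)
    (hexp : ∀ (q : ℕ) (x y : I), q * h ≤ x → x ≤ y → (y : ℝ) ≤ (q + 1) * h →
      4 * ((y : ℝ) - x) ≤ |(F y : ℝ) - F x|)
    (hcov : ∀ (q : ℕ) (a b x : I), (a : ℝ) = q * h → (b : ℝ) = (q + 1) * h →
      |(x : ℝ) - a| ≤ 2 * h → |(x : ℝ) - b| ≤ 2 * h →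
      ∀ z : I, |(z : ℝ) - f x| ≤ ε → z ∈ F '' Set.Icc a b)
    (hf : f ∈ closure TransSet) : IsTransitiveMap F := by
  intro U V hU hV hUne hVne
  obtain ⟨a, b, hab, habU⟩ := hU.exists_Ioo_subset hUne
  obtain ⟨a', ha, ha'⟩ := exists_between hab
  obtain ⟨b', hb', hb⟩ := exists_between ha'
  obtain ⟨k, hk⟩ := exists_pow_lt_of_lt_one (sub_pos.2 (Subtype.coe_lt_coe.2 hb'))
    (by norm_num : (1 / 2 : ℝ) < 1)
  obtain ⟨m, q, c, d, hc, hd, hcd⟩ := exists_iterate_covers_lap F hh h1 hexp k a' b' hb' hk.le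
  obtain ⟨g, hgT, hg⟩ := Metric.mem_closure_iff.1 hf (ε / 2) (by linarith)
  have hcd' : c < d := by rw [← Subtype.coe_lt_coe, hc, hd]; linarith
  obtain ⟨n, hn, x, hx, hxV⟩ := hgT (Set.Ioo c d) V isOpen_Ioo hV (Set.nonempty_Ioo.2 hcd') hVne
  obtain ⟨n, rfl⟩ := Nat.exists_eq_add_of_lt hn
  have hx1 : (c : ℝ) < x := hx.1
  have hx2 : (x : ℝ) < d := hx.2
  rw [Nat.zero_add] at hxV
  obtain ⟨y, hy, hyx⟩ := iterate_mem_image_lap f F g hh hε h1 hcov (fun x => by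
      have := (ContinuousMap.dist_apply_le_dist (f := f) (g := g) x).trans hg.le
      rwa [dist_comm, Subtype.dist_eq, Real.dist_eq] at this) n q c d x hc hd
    (by rw [abs_le]; constructor <;> linarith) (by rw [abs_le]; constructor <;> linarith)
  obtain ⟨w, hw, rfl⟩ := hcd hy
  refine ⟨n + 1 + m, by omega, w, habU ⟨ha.trans_le hw.1, hw.2.trans_lt hb⟩, ?_⟩
  rw [Set.mem_preimage, Function.iterate_add_apply, hyx]
  exact hxV

/-! ### Zigzags around a map -/

/-- A modulus of continuity of `f` at scale `ε`, chosen to depend continuously on `(f, ε)`: if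
`|x - y| < modulus f ε` then `|f x - f y| < ε`. -/
noncomputable def modulus (f : C(I, I)) (ε : ℝ) : ℝ :=
  sInf ((fun p : I × I => max |(p.1 : ℝ) - p.2| (ε - |(f p.1 : ℝ) - f p.2|)) '' Set.univ)

theorem continuous_modulus : Continuous fun p : C(I, I) × ℝ => modulus p.1 p.2 := by
  unfold modulus
  refine IsCompact.continuous_sInf
    (f := fun (p : C(I, I) × ℝ) (q : I × I) =>
      max |(q.1 : ℝ) - q.2| (p.2 - |(p.1 q.1 : ℝ) - p.1 q.2|)) isCompact_univ ?_
  simp only [Function.HasUncurry.uncurry, id]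
  fun_prop

theorem modulus_le (f : C(I, I)) (ε : ℝ) (x y : I) :
    modulus f ε ≤ max |(x : ℝ) - y| (ε - |(f x : ℝ) - f y|) :=
  csInf_le ⟨0, by rintro _ ⟨p, _, rfl⟩; exact (abs_nonneg _).trans (le_max_left _ _)⟩
    ⟨(x, y), Set.mem_univ _, rfl⟩

theorem modulus_le_self (f : C(I, I)) {ε : ℝ} (hε : 0 < ε) : modulus f ε ≤ ε := by
  simpa [hε.le] using modulus_le f ε 0 0

theorem modulus_pos (f : C(I, I)) {ε : ℝ} (hε : 0 < ε) : 0 < modulus f ε := by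
  obtain ⟨p, _, hp⟩ := (isCompact_univ (X := I × I)).exists_sInf_image_eq Set.univ_nonempty
    (f := fun p : I × I => max |(p.1 : ℝ) - p.2| (ε - |(f p.1 : ℝ) - f p.2|))
    (by fun_prop)
  unfold modulus
  rw [hp, lt_max_iff]
  by_cases h : p.1 = p.2
  · right; simpa [h] using hε
  · left; exact abs_pos.2 (sub_ne_zero.2 fun h' => h (Subtype.ext h'))

theorem abs_sub_lt_of_modulus (f : C(I, I)) {ε : ℝ} (hε : 0 < ε) {x y : I}
    (h : |(x : ℝ) - y| < modulus f ε) : |(f x : ℝ) - f y| < ε := by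
  have h1 := modulus_le f ε x y
  have h2 := modulus_pos f hε
  rcases le_max_iff.1 h1 with h3 | h3 <;> linarith

/-- The value of the zigzag at the grid point `p * h` (projected to `I`): alternately `2 * ε` below
and `2 * ε` above the value of `f`, truncated to `[0, 1]`. -/
noncomputable def node (f : C(I, I)) (ε h : ℝ) (p : ℕ) : ℝ :=
  if Even p then max 0 ((f (Set.projIcc 0 1 zero_le_one (p * h)) : ℝ) - 2 * ε)
  else min 1 ((f (Set.projIcc 0 1 zero_le_one (p * h)) : ℝ) + 2 * ε)

/-- The function on `[0, ∞)` interpolating linearly between the values `node f ε h p` at `p * h`,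
written as a sum of hat functions so that its continuity in all arguments is visible. -/
noncomputable def zigzag (f : C(I, I)) (ε h x : ℝ) : ℝ :=
  ∑' p : ℕ, max 0 (1 - |x / h - p|) * node f ε h p

theorem zigzag_eq_sum (f : C(I, I)) (ε : ℝ) {h x : ℝ} {N : ℕ} (hN : x / h ≤ N) :
    zigzag f ε h x = ∑ p ∈ Finset.range (N + 1), max 0 (1 - |x / h - p|) * node f ε h p := by
  refine tsum_eq_sum fun p hp => ?_
  have hp' : (N : ℝ) + 1 ≤ p := by
    rw [Finset.mem_range, not_lt] at hp; exact_mod_cast hp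
  rw [max_eq_left, zero_mul]
  have := neg_abs_le (x / h - p)
  linarith

theorem zigzag_eq (f : C(I, I)) (ε : ℝ) {h x : ℝ} (hh : 0 < h) {q : ℕ} (h1 : q * h ≤ x)
    (h2 : x ≤ (q + 1) * h) :
    zigzag f ε h x =
      (q + 1 - x / h) * node f ε h q + (x / h - q) * node f ε h (q + 1) := by
  have h1' : (q : ℝ) ≤ x / h := (le_div_iff₀ hh).2 h1
  have h2' : x / h ≤ q + 1 := (div_le_iff₀ hh).2 h2
  rw [zigzag_eq_sum f ε (N := q + 1) (by exact_mod_cast h2'), Finset.sum_range_succ,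
    Finset.sum_range_succ, Finset.sum_eq_zero, zero_add]
  · congr 2
    · rw [abs_of_nonneg (by linarith), max_eq_right] <;> linarith
    · push_cast
      rw [abs_of_nonpos (by linarith), max_eq_right] <;> linarith
  · intro p hp
    have hp' : (p : ℝ) + 1 ≤ q := by exact_mod_cast Finset.mem_range.1 hp
    rw [max_eq_left, zero_mul]
    have := le_abs_self (x / h - p)
    linarith

theorem node_nonneg (f : C(I, I)) {ε : ℝ} (hε : 0 < ε) (h : ℝ) (p : ℕ) : 0 ≤ node f ε h p := by
  have := (f (Set.projIcc 0 1 zero_le_one (p * h))).2.1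
  unfold node
  split_ifs
  · exact le_max_left _ _
  · exact le_min zero_le_one (by linarith)

theorem node_le_one (f : C(I, I)) {ε : ℝ} (hε : 0 < ε) (h : ℝ) (p : ℕ) : node f ε h p ≤ 1 := by
  have := (f (Set.projIcc 0 1 zero_le_one (p * h))).2.2
  unfold node
  split_ifs
  · exact max_le zero_le_one (by linarith)
  · exact min_le_left _ _

theorem exists_lap {h : ℝ} (hh : 0 < h) (x : I) :
    ∃ q : ℕ, q * h ≤ x ∧ (x : ℝ) ≤ (q + 1) * h :=
  ⟨⌊(x : ℝ) / h⌋₊, (le_div_iff₀ hh).1 (Nat.floor_le (div_nonneg x.2.1 hh.le)),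
    ((div_lt_iff₀ hh).1 (Nat.lt_floor_add_one _)).le⟩

theorem zigzag_mem (f : C(I, I)) {ε h : ℝ} (hε : 0 < ε) (hh : 0 < h) (x : I) :
    zigzag f ε h x ∈ Set.Icc (0 : ℝ) 1 := by
  obtain ⟨q, h1, h2⟩ := exists_lap hh x
  rw [zigzag_eq f ε hh h1 h2]
  have h1' : (q : ℝ) ≤ x / h := (le_div_iff₀ hh).2 h1
  have h2' : x / h ≤ q + 1 := (div_le_iff₀ hh).2 h2
  exact convex_Icc (0 : ℝ) 1 ⟨node_nonneg f hε h q, node_le_one f hε h q⟩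
    ⟨node_nonneg f hε h (q + 1), node_le_one f hε h (q + 1)⟩
    (sub_nonneg.2 h2') (sub_nonneg.2 h1') (by ring)

/-- If the `p`-th grid point is close to `x`, the node there overshoots the `ε`-neighbourhood of
`f x` downwards (`p` even) or upwards (`p` odd), and is within `3 * ε` of `f x`. -/
theorem node_bounds (f : C(I, I)) {ε h : ℝ} (hε : 0 < ε) (p : ℕ) (x : I)
    (hx : |(x : ℝ) - p * h| < modulus f ε) :
    (Even p → node f ε h p ≤ max 0 ((f x : ℝ) - ε)) ∧
      (¬ Even p → min 1 ((f x : ℝ) + ε) ≤ node f ε h p) ∧ |node f ε h p - f x| ≤ 3 * ε := by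
  have hp : |(x : ℝ) - (Set.projIcc 0 1 zero_le_one (p * h) : I)| < modulus f ε := by
    refine lt_of_le_of_lt ?_ hx
    have := Set.abs_projIcc_sub_projIcc (a := (0 : ℝ)) (b := 1) (c := x) (d := p * h) zero_le_one
    rwa [Set.projIcc_val] at this
  have hf := abs_lt.1 (abs_sub_lt_of_modulus f hε hp)
  have h0 := (f x).2.1
  have h1 := (f x).2.2
  unfold node
  refine ⟨fun he => ?_, fun he => ?_, ?_⟩
  · rw [if_pos he]; exact max_le_max le_rfl (by linarith)
  · rw [if_neg he]; exact min_le_min le_rfl (by linarith)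
  · rw [abs_le]
    split_ifs
    · constructor
      · have := le_max_right 0 ((f (Set.projIcc 0 1 zero_le_one (p * h)) : ℝ) - 2 * ε)
        linarith
      · have : max 0 ((f (Set.projIcc 0 1 zero_le_one (p * h)) : ℝ) - 2 * ε) ≤ f x + 3 * ε :=
          max_le (by linarith) (by linarith)
        linarith
    · constructor
      · have : f x - 3 * ε ≤ min 1 ((f (Set.projIcc 0 1 zero_le_one (p * h)) : ℝ) + 2 * ε) :=
          le_min (by linarith) (by linarith)
        linarith
      · have := min_le_right 1 ((f (Set.projIcc 0 1 zero_le_one (p * h)) : ℝ) + 2 * ε)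
        linarith

/-- If two consecutive grid points are close to `x`, the nodes there bound an interval covering the
`ε`-neighbourhood of `f x` in `I`. -/
theorem Icc_subset_uIcc_node (f : C(I, I)) {ε h : ℝ} (hε : 0 < ε) (q : ℕ) (x : I)
    (h1 : |(x : ℝ) - q * h| < modulus f ε) (h2 : |(x : ℝ) - (q + 1) * h| < modulus f ε) :
    Set.Icc (max 0 ((f x : ℝ) - ε)) (min 1 ((f x : ℝ) + ε)) ⊆
      Set.uIcc (node f ε h q) (node f ε h (q + 1)) := by
  obtain ⟨a1, a2, -⟩ := node_bounds f hε q x h1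
  obtain ⟨b1, b2, -⟩ := node_bounds f hε (q + 1) x (by exact_mod_cast h2)
  rintro z ⟨hz1, hz2⟩
  rw [Set.mem_uIcc]
  by_cases he : Even q
  · exact Or.inl ⟨(a1 he).trans hz1, hz2.trans (b2 (by simpa [Nat.even_add_one] using he))⟩
  · exact Or.inr ⟨(b1 (by simpa [Nat.even_add_one] using he)).trans hz1, hz2.trans (a2 he)⟩

theorem abs_zigzag_sub_le (f : C(I, I)) {ε h : ℝ} (hε : 0 < ε) (hh : 0 < h)
    (hm : h < modulus f ε) (x : I) : |zigzag f ε h x - f x| ≤ 3 * ε := by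
  obtain ⟨q, h1, h2⟩ := exists_lap hh x
  rw [zigzag_eq f ε hh h1 h2]
  have h1' : (q : ℝ) ≤ x / h := (le_div_iff₀ hh).2 h1
  have h2' : x / h ≤ q + 1 := (div_le_iff₀ hh).2 h2
  have a := (node_bounds f hε (h := h) q x (by rw [abs_lt]; constructor <;> linarith)).2.2
  have b := (node_bounds f hε (h := h) (q + 1) x
    (by push_cast; rw [abs_lt]; constructor <;> linarith)).2.2
  rw [← Real.dist_eq, ← Metric.mem_closedBall] at a b ⊢
  exact convex_closedBall (f x : ℝ) (3 * ε) a b (sub_nonneg.2 h2') (sub_nonneg.2 h1') (by ring)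

/-- Consecutive nodes are at least `ε` apart, so the zigzag has slope at least `4` on each lap. -/
theorem zigzag_expands (f : C(I, I)) {ε h : ℝ} (hε : 0 < ε) (hε1 : ε ≤ 1) (hh : 0 < h)
    (hm : h < modulus f ε) (hhε : h ≤ ε / 4) (q : ℕ) (x y : I) (hx : q * h ≤ x) (hxy : x ≤ y)
    (hy : (y : ℝ) ≤ (q + 1) * h) :
    4 * ((y : ℝ) - x) ≤ |zigzag f ε h y - zigzag f ε h x| := by
  have hxy' : (x : ℝ) ≤ y := hxy
  have hsub := Icc_subset_uIcc_node f hε (h := h) q x (by rw [abs_lt]; constructor <;> linarith)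
    (by rw [abs_lt]; constructor <;> linarith)
  have h0 := (f x).2.1
  have h1 := (f x).2.2
  have hlen : ε ≤ min 1 ((f x : ℝ) + ε) - max 0 ((f x : ℝ) - ε) := by
    rcases min_cases 1 ((f x : ℝ) + ε) with h | h <;>
      rcases max_cases 0 ((f x : ℝ) - ε) with h' | h' <;> linarith
  have hle : max 0 ((f x : ℝ) - ε) ≤ min 1 ((f x : ℝ) + ε) := by linarith
  have hgap : ε ≤ |node f ε h (q + 1) - node f ε h q| := by
    have := Set.abs_sub_le_of_uIcc_subset_uIcc
      (c := max 0 ((f x : ℝ) - ε)) (d := min 1 ((f x : ℝ) + ε))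
      (a := node f ε h q) (b := node f ε h (q + 1)) (by rwa [Set.uIcc_of_le hle])
    exact (hlen.trans (le_abs_self _)).trans this
  rw [zigzag_eq f ε hh hx (hxy'.trans hy), zigzag_eq f ε hh (hx.trans hxy') hy]
  have heq : (q + 1 - (y : ℝ) / h) * node f ε h q + ((y : ℝ) / h - q) * node f ε h (q + 1) -
      ((q + 1 - (x : ℝ) / h) * node f ε h q + ((x : ℝ) / h - q) * node f ε h (q + 1)) =
      (((y : ℝ) - x) / h) * (node f ε h (q + 1) - node f ε h q) := by ring
  rw [heq, abs_mul, abs_of_nonneg (div_nonneg (sub_nonneg.2 hxy') hh.le)]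
  calc 4 * ((y : ℝ) - x) = ((y : ℝ) - x) / h * (4 * h) := by field_simp
    _ ≤ ((y : ℝ) - x) / h * |node f ε h (q + 1) - node f ε h q| :=
      mul_le_mul_of_nonneg_left (by linarith) (div_nonneg (sub_nonneg.2 hxy') hh.le)

/-! ### The homotopy -/

/-- The homotopy, as a function of map, time and point: at time `t > 0` the zigzag with amplitude
`t` around `f`, whose mesh is a quarter of the modulus of continuity at scale `t`. -/
noncomputable def homotopyFun (f : C(I, I)) (t x : I) : I :=
  if (t : ℝ) = 0 then f x
  else Set.projIcc 0 1 zero_le_one (zigzag f t (modulus f t / 4) x)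

theorem coe_homotopyFun (f : C(I, I)) {t : I} (ht : 0 < (t : ℝ)) (x : I) :
    (homotopyFun f t x : ℝ) = zigzag f t (modulus f t / 4) x := by
  rw [homotopyFun, if_neg ht.ne', Set.projIcc_of_mem _ (zigzag_mem f ht
    (by have := modulus_pos f ht; linarith) x)]

theorem dist_homotopyFun_le (f : C(I, I)) (t x : I) : dist (homotopyFun f t x) (f x) ≤ 3 * t := by
  rcases t.2.1.eq_or_lt with ht | ht
  · simp [homotopyFun, ← ht]
  · have := modulus_pos f ht
    rw [Subtype.dist_eq, Real.dist_eq, coe_homotopyFun f ht]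
    exact abs_zigzag_sub_le f ht (by linarith) (by linarith) x

theorem continuous_homotopyFun :
    Continuous fun p : (C(I, I) × I) × I => homotopyFun p.1.1 p.1.2 p.2 := by
  rw [continuous_iff_continuousAt]
  rintro ⟨⟨f, t⟩, x⟩
  rcases t.2.1.eq_or_lt with ht | ht
  · -- At time 0 the homotopy is squeezed by its distance to the evaluation map.
    have ht0 : t = 0 := Subtype.ext ht.symm
    subst ht0
    have hev : Continuous fun p : (C(I, I) × I) × I => p.1.1 p.2 := by fun_prop
    have hd : Filter.Tendsto (fun p : (C(I, I) × I) × I =>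
        dist (p.1.1 p.2) (homotopyFun p.1.1 p.1.2 p.2)) (nhds ((f, 0), x)) (nhds 0) := by
      refine squeeze_zero (fun _ => dist_nonneg)
        (fun p => (dist_comm _ _).trans_le (dist_homotopyFun_le p.1.1 p.1.2 p.2)) ?_
      have : Continuous fun p : (C(I, I) × I) × I => 3 * (p.1.2 : ℝ) := by fun_prop
      simpa using this.tendsto ((f, 0), x)
    have := (hev.tendsto ((f, 0), x)).congr_dist hd
    simpa [ContinuousAt, homotopyFun] using this
  · -- Near a positive time the mesh is bounded below, so finitely many hat functions matter.
    have hm : Continuous fun p : (C(I, I) × I) × I => modulus p.1.1 p.1.2 / 4 :=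
      (continuous_modulus.comp (f := fun p : (C(I, I) × I) × I => (p.1.1, (p.1.2 : ℝ)))
        (by fun_prop)).div_const 4
    have hm0 : 0 < modulus f t / 4 := by have := modulus_pos f ht; linarith
    obtain ⟨N, hN⟩ := exists_nat_gt (1 / (modulus f t / 4 / 2))
    have ev1 : ∀ᶠ p : (C(I, I) × I) × I in nhds ((f, t), x),
        modulus f t / 4 / 2 < modulus p.1.1 p.1.2 / 4 :=
      (hm.tendsto ((f, t), x)).eventually_const_lt (by simpa using hm0)
    have ev2 : ∀ᶠ p : (C(I, I) × I) × I in nhds ((f, t), x), 0 < (p.1.2 : ℝ) :=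
      ((by fun_prop : Continuous fun p : (C(I, I) × I) × I => (p.1.2 : ℝ)).tendsto
        ((f, t), x)).eventually_const_lt ht
    have hsum : ContinuousAt (fun p : (C(I, I) × I) × I => Set.projIcc (0 : ℝ) 1 zero_le_one
        (∑ k ∈ Finset.range (N + 1), max 0 (1 - |(p.2 : ℝ) / (modulus p.1.1 p.1.2 / 4) - k|) *
          node p.1.1 p.1.2 (modulus p.1.1 p.1.2 / 4) k)) ((f, t), x) := by
      refine continuous_projIcc.continuousAt.comp ?_
      refine tendsto_finsetSum _ fun k _ => ContinuousAt.mul ?_ ?_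
      · have hdiv : ContinuousAt (fun p : (C(I, I) × I) × I =>
            (p.2 : ℝ) / (modulus p.1.1 p.1.2 / 4)) ((f, t), x) :=
          ContinuousAt.div (by fun_prop) hm.continuousAt hm0.ne'
        fun_prop
      · refine Continuous.continuousAt ?_
        have hproj : Continuous fun p : (C(I, I) × I) × I =>
            Set.projIcc (0 : ℝ) 1 zero_le_one (k * (modulus p.1.1 p.1.2 / 4)) :=
          continuous_projIcc.comp (continuous_const.mul hm)
        unfold node
        split_ifs <;> fun_prop
    refine hsum.congr ?_
    filter_upwards [ev1, ev2] with p hp1 hp2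
    have hN' : (p.2 : ℝ) / (modulus p.1.1 p.1.2 / 4) ≤ N := by
      refine le_trans ?_ hN.le
      exact div_le_div₀ zero_le_one p.2.2.2 (by linarith) hp1.le
    rw [homotopyFun, if_neg hp2.ne', zigzag_eq_sum _ _ hN']

/-- The homotopy as a continuous map into `C(I, I)`. -/
noncomputable def homotopyMap : C(C(I, I) × I, C(I, I)) :=
  ContinuousMap.curry ⟨_, continuous_homotopyFun⟩

theorem homotopyMap_apply (f : C(I, I)) (t x : I) : homotopyMap (f, t) x = homotopyFun f t x := rfl

theorem homotopyMap_zero (f : C(I, I)) : homotopyMap (f, 0) = f := by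
  ext x; simp [homotopyMap_apply, homotopyFun]

theorem homotopyMap_mem_transSet {f : C(I, I)} (hf : f ∈ closure TransSet) {t : I}
    (ht : 0 < (t : ℝ)) : homotopyMap (f, t) ∈ TransSet := by
  have hm := modulus_pos f ht
  have hmt := modulus_le_self f ht
  have ht1 := t.2.2
  have hh : 0 < modulus f t / 4 := by linarith
  refine isTransitiveMap_of_laps f _ (ε := t) hh (by linarith) (by linarith) ?_ ?_ hf
  · intro q x y hx hxy hy
    simp only [homotopyMap_apply, coe_homotopyFun f ht]
    exact zigzag_expands f ht ht1 hh (by linarith) (by linarith) q x y hx hxy hy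
  · intro q a b x ha hb hxa hxb z hz
    have hab : a ≤ b := by rw [← Subtype.coe_le_coe, ha, hb]; linarith
    have hiv : Set.uIcc (homotopyMap (f, t) a) (homotopyMap (f, t) b) ⊆
        homotopyMap (f, t) '' Set.uIcc a b :=
      intermediate_value_uIcc (homotopyMap (f, t)).continuous.continuousOn
    rw [Set.uIcc_of_le hab] at hiv
    apply hiv
    have hFa : ((homotopyMap (f, t) a : I) : ℝ) = node f t (modulus f t / 4) q := by
      rw [homotopyMap_apply, coe_homotopyFun f ht, zigzag_eq f t hh ha.ge (by linarith), ha,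
        mul_div_cancel_right₀ _ hh.ne']
      ring
    have hFb : ((homotopyMap (f, t) b : I) : ℝ) = node f t (modulus f t / 4) (q + 1) := by
      rw [homotopyMap_apply, coe_homotopyFun f ht, zigzag_eq f t hh (by linarith) hb.le, hb,
        mul_div_cancel_right₀ _ hh.ne']
      ring
    have hz' := abs_le.1 hz
    have := Icc_subset_uIcc_node f ht (h := modulus f t / 4) q x (by rw [← ha]; linarith)
      (by rw [← hb]; linarith)
      ⟨max_le z.2.1 (by linarith), le_min z.2.2 (by linarith)⟩
    rw [← hFa, ← hFb, Set.mem_uIcc] at this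
    exact Set.mem_uIcc.2 this

theorem transSet_homotopy_dense_in_closure :
    ∃ H : ↥(closure TransSet) × I → ↥(closure TransSet),
      Continuous H ∧
      (∀ f : ↥(closure TransSet), H (f, 0) = f) ∧
      (∀ (f : ↥(closure TransSet)) (t : I), 0 < (t : ℝ) →
        ((H (f, t) : C(I, I)) ∈ TransSet)) := by
  have hmem : ∀ p : ↥(closure TransSet) × I,
      homotopyMap ((p.1 : C(I, I)), p.2) ∈ closure TransSet := by
    rintro ⟨f, t⟩
    rcases t.2.1.eq_or_lt with ht | ht
    · have ht0 : t = 0 := Subtype.ext ht.symm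
      subst ht0
      rw [homotopyMap_zero]
      exact f.2
    · exact subset_closure (homotopyMap_mem_transSet f.2 ht)
  refine ⟨fun p => ⟨homotopyMap ((p.1 : C(I, I)), p.2), hmem p⟩, ?_, ?_, ?_⟩
  · exact (homotopyMap.continuous.comp (by fun_prop)).subtype_mk hmem
  · exact fun f => Subtype.ext (homotopyMap_zero f)
  · exact fun f t ht => homotopyMap_mem_transSet f.2 ht
end

section
/- The closure cl T(I) of T(I) in C(I) is an absolute retract: for every metric space Z and every closed topological embedding e : cl T(I) → Z, there exists a continuous map r : Z → cl T(I) with r ∘ e = id on cl T(I). -/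
/-!
Since `I` is a Tietze extension space, currying extends the inverse of a closed embedding of any
subspace of `C(I, I)` to a continuous map from `Z` to `C(I, I)`. It therefore suffices to retract
`C(I, I)` onto the closure of the transitive maps (`exists_retraction`).

Let `τ` be the distance from `f` to the transitive maps. If `τ = 0`, then `f` stays fixed. If
`τ > 0`, then `f` is replaced by a Lipschitz map `p` within `τ` of it, to which a zigzag of
amplitude `4 * τ` and very high frequency is added; the result is folded back into `[0, 1]` by a
triangle wave. A convexity argument with partitions of unity (`exists_selection`) makes `p` and its
Lipschitz constant depend continuously on `f`. The new map is within `5 * τ` of `f`, which gives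
continuity at the fixed points.

The new map is transitive (`pert_transitive`). The zigzag is so much steeper than `p` that short
intervals at least double in length (`pert_expand`) until they are as long as one period of the
zigzag; from then on, the image of an interval contains the `3 * τ`-neighbourhood of `p x` for each
`x` in it (`pert_cover`). Hence the iterates of every interval follow every `3 * τ`-chain of `p`.
Such chains join any two points: `p` is close to `f`, hence to a transitive map `g`, and orbits of
`g` provide chains of arbitrarily small error (`chain_of_near`).
-/

open unitInterval Topology

/-! ### The triangle wave -/

/-- The triangle wave `u ↦ dist (u, 2ℤ)`, realised as the norm on the circle `ℝ / 2ℤ`.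
It fixes `[0, 1]` pointwise, folds `ℝ` onto `[0, 1]`, and has slope `±1`. -/
noncomputable def tri (u : ℝ) : ℝ := ‖(u : AddCircle (2 : ℝ))‖

lemma tri_continuous : Continuous tri :=
  continuous_norm.comp (AddCircle.continuous_mk' 2)

lemma tri_mem (u : ℝ) : tri u ∈ Set.Icc (0 : ℝ) 1 := by
  refine ⟨norm_nonneg _, ?_⟩
  have := AddCircle.norm_le_half_period (p := (2 : ℝ)) (x := (u : AddCircle (2 : ℝ))) two_ne_zero
  simpa [tri] using this

lemma tri_eq (u : ℝ) (k : ℤ) (h : |u - 2 * k| ≤ 1) : tri u = |u - 2 * k| := by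
  have h1 : ((u - 2 * k : ℝ) : AddCircle (2 : ℝ)) = (u : AddCircle (2 : ℝ)) := by
    rw [show (u - 2 * k : ℝ) = u - k • (2 : ℝ) by simp [mul_comm], AddCircle.coe_sub,
      AddCircle.coe_zsmul, AddCircle.coe_period, smul_zero, sub_zero]
  rw [tri, ← h1, (AddCircle.norm_coe_eq_abs_iff (2 : ℝ) two_ne_zero).2 (by simpa using h)]

lemma tri_of_mem {u : ℝ} (h : u ∈ Set.Icc (0 : ℝ) 1) : tri u = u := by
  have := tri_eq u 0 (by simp [abs_of_nonneg h.1, h.2])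
  simpa [abs_of_nonneg h.1] using this

lemma tri_lip (u v : ℝ) : |tri u - tri v| ≤ |u - v| := by
  have h1 := abs_norm_sub_norm_le (u : AddCircle (2 : ℝ)) (v : AddCircle (2 : ℝ))
  refine h1.trans ?_
  rw [← AddCircle.coe_sub]
  exact QuotientAddGroup.norm_mk_le_norm

lemma exists_tri_eq_zero (c : ℝ) : ∃ d ∈ Set.Icc c (c + 2), tri d = 0 := by
  refine ⟨2 * ⌈c / 2⌉, ⟨?_, ?_⟩, ?_⟩
  · linarith [Int.le_ceil (c / 2)]
  · linarith [Int.ceil_lt_add_one (c / 2)]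
  · rw [tri_eq _ ⌈c / 2⌉ (by simp)]; simp

lemma exists_tri_eq_one (c : ℝ) : ∃ d ∈ Set.Icc c (c + 2), tri d = 1 := by
  refine ⟨2 * ⌈(c - 1) / 2⌉ + 1, ⟨?_, ?_⟩, ?_⟩
  · linarith [Int.le_ceil ((c - 1) / 2)]
  · linarith [Int.ceil_lt_add_one ((c - 1) / 2)]
  · rw [tri_eq _ ⌈(c - 1) / 2⌉ (by simp)]; simp

/-- Between consecutive integers the triangle wave is an isometry. -/
lemma tri_isometry (n : ℤ) {a b : ℝ} (ha : (n : ℝ) ≤ a) (hab : a ≤ b) (hb : b ≤ n + 1) :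
    |tri a - tri b| = b - a := by
  obtain ⟨k, rfl | rfl⟩ := Int.even_or_odd' n
  · push_cast at ha hb
    have e1 : |a - 2 * k| = a - 2 * k := abs_of_nonneg (by linarith)
    have e2 : |b - 2 * k| = b - 2 * k := abs_of_nonneg (by linarith)
    rw [tri_eq a k (by linarith), tri_eq b k (by linarith), e1, e2, abs_of_nonpos] <;> linarith
  · push_cast at ha hb
    have e1 : |a - 2 * (k + 1 : ℤ)| = 2 * (k + 1) - a := by
      push_cast; rw [abs_of_nonpos (by linarith)]; ring
    have e2 : |b - 2 * (k + 1 : ℤ)| = 2 * (k + 1) - b := by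
      push_cast; rw [abs_of_nonpos (by linarith)]; ring
    rw [tri_eq a (k + 1) (by linarith), tri_eq b (k + 1) (by linarith), e1, e2, abs_of_nonneg] <;>
      linarith

/-- Folding costs at most half of the length: a short interval contains at most one corner. -/
lemma exists_tri_isometry {a b : ℝ} (hab : a ≤ b) :
    ∃ c d, a ≤ c ∧ c ≤ d ∧ d ≤ b ∧ min (b - a) 1 / 2 ≤ d - c ∧ |tri c - tri d| = d - c := by
  have h1 := Int.floor_le a
  have h2 := Int.lt_floor_add_one a
  set n := ⌊a⌋
  have m1 := min_le_left (b - a) 1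
  have m2 := min_le_right (b - a) 1
  by_cases hb : b ≤ n + 1
  · exact ⟨a, b, le_rfl, hab, le_rfl, by linarith, tri_isometry n h1 hab hb⟩
  push Not at hb
  by_cases hc : min (b - a) 1 / 2 ≤ n + 1 - a
  · exact ⟨a, n + 1, le_rfl, h2.le, hb.le, hc, tri_isometry n h1 h2.le le_rfl⟩
  push Not at hc
  refine ⟨n + 1, min b (n + 2), h2.le, le_min hb.le (by linarith), min_le_left _ _, ?_,
    tri_isometry (n + 1) (by push_cast; rfl) (le_min hb.le (by linarith)) ?_⟩
  · rcases min_choice b ((n : ℝ) + 2) with h | h <;> rw [h] <;> linarith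
  · push_cast; exact (min_le_right _ _).trans (by linarith)

/-! ### Zigzag perturbations -/

/-- `p x` plus a zigzag of amplitude `4 * τ` and frequency `N`, before folding into `[0, 1]`. -/
noncomputable def zig (p : C(I, ℝ)) (τ N : ℝ) (x : I) : ℝ := p x + 4 * τ * (2 * tri (N * x) - 1)

lemma zig_continuous (p : C(I, ℝ)) (τ N : ℝ) : Continuous (zig p τ N) := by
  have := tri_continuous
  unfold zig
  fun_prop

/-- The self-map of `I` obtained from `zig p τ N` by folding `ℝ` onto `[0, 1]`. Folding, unlike
truncation, preserves the absolute values of slopes. -/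
noncomputable def pert (p : C(I, ℝ)) (τ N : ℝ) : C(I, I) where
  toFun x := ⟨tri (zig p τ N x), tri_mem _⟩
  continuous_toFun := (tri_continuous.comp (zig_continuous p τ N)).subtype_mk _

/-- The frequency used for an `M`-Lipschitz map and a zigzag of amplitude `4 * τ`. -/
noncomputable def freq (τ M : ℝ) : ℝ := 4 * (M + 1) / τ

section
variable {p : C(I, ℝ)} {τ M : ℝ} (hτ : 0 < τ) (hτ1 : τ ≤ 1) (hM : 0 ≤ M)
  (hp : ∀ x y : I, |p x - p y| ≤ M * |(x : ℝ) - y|)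
include hτ hM hp

/-- Over an interval as long as one period, the perturbed map covers the whole
`3 * τ`-neighbourhood of the value of `p` at any point of the interval. -/
lemma pert_cover {S : Set I} (hS : IsPreconnected S) {a b : I} (ha : a ∈ S) (hb : b ∈ S)
    (hab : 2 / freq τ M ≤ (b : ℝ) - a) {x y : I} (hx : x ∈ S) (hxy : |p x - y| < 3 * τ) :
    y ∈ pert p τ (freq τ M) '' S := by
  have hN : 0 < freq τ M := by unfold freq; positivity
  have hMN : M * (2 / freq τ M) ≤ τ / 2 := by
    unfold freq
    rw [div_div_eq_mul_div, ← mul_div_assoc, div_le_iff₀ (by positivity)]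
    nlinarith
  set N := freq τ M
  -- an interval of length one period that contains `x` and lies in `S`
  obtain ⟨c, hc1, hc2, hcS⟩ : ∃ c : ℝ, c ≤ x ∧ x ≤ c + 2 / N ∧
      ∀ w : ℝ, c ≤ w → w ≤ c + 2 / N → ∃ z ∈ S, (z : ℝ) = w := by
    have hl : 0 < 2 / N := by positivity
    have hconv := fun (u v : I) (hu : u ∈ S) (hv : v ∈ S) =>
      hS.intermediate_value hu hv (f := fun z : I => (z : ℝ)) (by fun_prop)
    by_cases h : (a : ℝ) ≤ x - 2 / N
    · refine ⟨x - 2 / N, by linarith, by linarith, fun w h1 h2 => hconv a x ha hx ⟨?_, ?_⟩⟩ <;>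
        linarith
    · by_cases h' : a ≤ x
      · have h' : (a : ℝ) ≤ x := h'
        refine ⟨a, h', by linarith, fun w h1 h2 => hconv a b ha hb ⟨?_, ?_⟩⟩ <;>
          linarith
      · have h' : (x : ℝ) < a := not_le.1 h'
        refine ⟨x, le_rfl, by linarith, fun w h1 h2 => hconv x b hx hb ⟨?_, ?_⟩⟩ <;>
          linarith
  have key : ∀ d ∈ Set.Icc (N * c) (N * c + 2), ∃ z ∈ S, N * (z : ℝ) = d ∧
      |p z - p x| ≤ τ / 2 := by
    intro d hd
    obtain ⟨z, hz, hzd⟩ := hcS (d / N) (by rw [le_div_iff₀ hN]; linarith [hd.1])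
      (by rw [div_le_iff₀ hN, add_mul, div_mul_cancel₀ _ hN.ne']; linarith [hd.2])
    refine ⟨z, hz, by rw [hzd]; field_simp, (hp z x).trans (le_trans ?_ hMN)⟩
    refine mul_le_mul_of_nonneg_left ?_ hM
    have hz1 : c ≤ z := by rw [hzd, le_div_iff₀ hN]; linarith [hd.1]
    have hz2 : z ≤ c + 2 / N := by
      rw [hzd, div_le_iff₀ hN, add_mul, div_mul_cancel₀ _ hN.ne']; linarith [hd.2]
    rw [abs_le]; constructor <;> linarith
  obtain ⟨d0, hd0, ht0⟩ := exists_tri_eq_zero (N * c)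
  obtain ⟨d1, hd1, ht1⟩ := exists_tri_eq_one (N * c)
  obtain ⟨z0, hz0, e0, h0⟩ := key d0 hd0
  obtain ⟨z1, hz1, e1, h1⟩ := key d1 hd1
  have u0 : zig p τ N z0 = p z0 - 4 * τ := by rw [zig, e0, ht0]; ring
  have u1 : zig p τ N z1 = p z1 + 4 * τ := by rw [zig, e1, ht1]; ring
  rw [abs_le] at h0 h1
  rw [abs_lt] at hxy
  obtain ⟨w, hw, hwy⟩ := hS.intermediate_value hz0 hz1 (zig_continuous p τ N).continuousOn
    (show (y : ℝ) ∈ _ from ⟨by rw [u0]; linarith, by rw [u1]; linarith⟩)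
  exact ⟨w, hw, Subtype.ext (by change tri (zig p τ N w) = y; rw [hwy, tri_of_mem y.2])⟩

include hτ1 in
/-- The perturbed map doubles lengths of intervals, up to the length of one period. -/
lemma pert_expand {S : Set I} (hS : IsPreconnected S) {a b : I} (ha : a ∈ S) (hb : b ∈ S)
    (hab : a ≤ b) : ∃ a' ∈ pert p τ (freq τ M) '' S, ∃ b' ∈ pert p τ (freq τ M) '' S,
      min (2 * ((b : ℝ) - a)) (2 / freq τ M) ≤ (b' : ℝ) - a' := by
  have hN : 0 < freq τ M := by unfold freq; positivity
  have hNτ : freq τ M * τ = 4 * (M + 1) := by unfold freq; field_simp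
  have hl : 2 / freq τ M ≤ τ / 2 := by
    unfold freq
    rw [div_div_eq_mul_div, div_le_iff₀ (by positivity)]
    nlinarith
  set N := freq τ M
  have hab' : (a : ℝ) ≤ b := hab
  -- a monotone piece of the zigzag
  obtain ⟨c, d, hac, hcd, hdb, hlen, hiso⟩ :=
    exists_tri_isometry (mul_le_mul_of_nonneg_left hab' hN.le)
  have hconv := hS.intermediate_value ha hb (f := fun z : I => (z : ℝ)) (by fun_prop)
  obtain ⟨z, hz, hzc⟩ := hconv (show c / N ∈ _ from ⟨by
    rw [le_div_iff₀ hN]; linarith, by rw [div_le_iff₀ hN]; linarith⟩)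
  obtain ⟨w, hw, hwd⟩ := hconv (show d / N ∈ _ from ⟨by
    rw [le_div_iff₀ hN]; linarith, by rw [div_le_iff₀ hN]; linarith⟩)
  dsimp only at hzc hwd
  have ez : N * (z : ℝ) = c := by rw [hzc]; field_simp
  have ew : N * (w : ℝ) = d := by rw [hwd]; field_simp
  have hpzw := hp z w
  have hMd : M * |(z : ℝ) - w| ≤ τ * (d - c) := by
    have e : |(z : ℝ) - w| = (d - c) / N := by
      rw [hzc, hwd, ← sub_div, abs_div, abs_of_pos hN, abs_sub_comm, abs_of_nonneg (by linarith)]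
    rw [e, ← mul_div_assoc, div_le_iff₀ hN]
    nlinarith
  have hu : 7 * τ * (d - c) ≤ |zig p τ N z - zig p τ N w| := by
    have e : zig p τ N z - zig p τ N w = (p z - p w) + 8 * τ * (tri c - tri d) := by
      rw [zig, zig, ez, ew]; ring
    have e2 : |8 * τ * (tri c - tri d)| = 8 * τ * (d - c) := by
      rw [abs_mul, hiso, abs_of_pos (by positivity)]
    have h3 := abs_sub_abs_le_abs_sub (8 * τ * (tri c - tri d)) (-(p z - p w))
    rw [abs_neg, e2] at h3
    rw [e, show (p z - p w) + 8 * τ * (tri c - tri d)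
      = 8 * τ * (tri c - tri d) - -(p z - p w) by ring]
    linarith
  -- order the two values, then fold
  have aux : ∀ z ∈ S, ∀ w ∈ S, zig p τ N z ≤ zig p τ N w →
      7 * τ * (d - c) ≤ zig p τ N w - zig p τ N z →
      ∃ a' ∈ pert p τ N '' S, ∃ b' ∈ pert p τ N '' S,
        min (2 * ((b : ℝ) - a)) (2 / N) ≤ (b' : ℝ) - a' := by
    intro z hz w hw hzw hlen2
    obtain ⟨c', d', h1, h2, h3, h4, h5⟩ := exists_tri_isometry hzw
    have hcv := hS.intermediate_value hz hw (zig_continuous p τ N).continuousOn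
    obtain ⟨z', hz', hzc'⟩ := hcv (show c' ∈ _ from ⟨h1, by linarith⟩)
    obtain ⟨w', hw', hwd'⟩ := hcv (show d' ∈ _ from ⟨by linarith, h3⟩)
    have fin : min (2 * ((b : ℝ) - a)) (2 / N) ≤ d' - c' := by
      refine le_trans ?_ h4
      have hNM : 4 * ((b : ℝ) - a) ≤ τ * (N * b - N * a) := by
        have : τ * (N * b - N * a) = 4 * (M + 1) * (b - a) := by rw [← hNτ]; ring
        rw [this]; nlinarith
      rcases min_choice (zig p τ N w - zig p τ N z) 1 with h | h <;> rw [h]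
      · rcases min_choice (N * (b : ℝ) - N * a) 1 with h' | h' <;> rw [h'] at hlen
        · refine (min_le_left _ _).trans ?_
          nlinarith
        · refine (min_le_right _ _).trans ?_
          nlinarith
      · refine (min_le_right _ _).trans ?_
        linarith
    have pz : ((pert p τ N z' : I) : ℝ) = tri c' := by rw [← hzc']; rfl
    have pw : ((pert p τ N w' : I) : ℝ) = tri d' := by rw [← hwd']; rfl
    rcases abs_choice (tri c' - tri d') with h | h
    · exact ⟨_, ⟨w', hw', rfl⟩, _, ⟨z', hz', rfl⟩, by rw [pz, pw]; linarith⟩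
    · exact ⟨_, ⟨z', hz', rfl⟩, _, ⟨w', hw', rfl⟩, by rw [pz, pw]; linarith⟩
  rcases le_total (zig p τ N z) (zig p τ N w) with h | h
  · refine aux z hz w hw h ?_
    rwa [abs_sub_comm, abs_of_nonneg (by linarith)] at hu
  · refine aux w hw z hz h ?_
    rwa [abs_of_nonneg (by linarith)] at hu

include hτ1 in
lemma pert_iterate_expand {S : Set I} (hS : IsPreconnected S) {a b : I} (ha : a ∈ S) (hb : b ∈ S)
    (hab : a ≤ b) (n : ℕ) : ∃ a' ∈ (pert p τ (freq τ M))^[n] '' S,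
      ∃ b' ∈ (pert p τ (freq τ M))^[n] '' S, a' ≤ b' ∧
      min (2 ^ n * ((b : ℝ) - a)) (2 / freq τ M) ≤ (b' : ℝ) - a' := by
  have hN : 0 < freq τ M := by unfold freq; positivity
  have hab' : (0 : ℝ) ≤ b - a := sub_nonneg.2 hab
  induction n with
  | zero => exact ⟨a, by simpa using ha, b, by simpa using hb, hab, by simp⟩
  | succ n ih =>
    obtain ⟨a', ha', b', hb', hle, hm⟩ := ih
    have hS' := hS.image _ ((pert p τ (freq τ M)).continuous.iterate n).continuousOn
    obtain ⟨a2, ha2, b2, hb2, h2⟩ := pert_expand hτ hτ1 hM hp hS' ha' hb' hle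
    rw [Function.iterate_succ', Set.image_comp]
    refine ⟨a2, ha2, b2, hb2, ?_, ?_⟩
    · have : 0 ≤ (b2 : ℝ) - a2 := le_trans (le_min (by
        have : (a' : ℝ) ≤ b' := hle
        linarith) (by positivity)) h2
      exact (sub_nonneg.1 this : (a2 : ℝ) ≤ b2)
    · refine le_trans (le_min ?_ (min_le_right _ _)) h2
      have hl : 0 < 2 / freq τ M := by positivity
      rcases min_choice (2 ^ n * ((b : ℝ) - a)) (2 / freq τ M) with h | h <;> rw [h] at hm
      · refine (min_le_left _ _).trans ?_
        rw [pow_succ]; linarith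
      · refine (min_le_right _ _).trans ?_
        linarith

include hτ1 in
/-- Once a set is as long as a period, its iterates follow every `3 * τ`-chain of `p`. -/
lemma pert_follow_chain {x y : I} (h : Relation.TransGen (fun a b : I => |p a - b| < 3 * τ) x y) :
    ∀ {S : Set I}, IsPreconnected S → (∃ a ∈ S, ∃ b ∈ S, 2 / freq τ M ≤ (b : ℝ) - a) → x ∈ S →
      ∃ n, 0 < n ∧ y ∈ (pert p τ (freq τ M))^[n] '' S := by
  have hN : 0 < freq τ M := by unfold freq; positivity
  have hl : 0 < 2 / freq τ M := by positivity
  induction h using Relation.TransGen.head_induction_on with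
  | single h =>
    rintro S hS ⟨a, ha, b, hb, hab⟩ hx
    exact ⟨1, one_pos, by simpa using pert_cover hτ hM hp hS ha hb hab hx h⟩
  | head h _ ih =>
    rintro S hS ⟨a, ha, b, hb, hab⟩ hx
    obtain ⟨a', ha', b', hb', h'⟩ := pert_expand hτ hτ1 hM hp hS ha hb (by
      change (a : ℝ) ≤ b; linarith)
    obtain ⟨n, -, hy⟩ := ih (hS.image _ (pert p τ (freq τ M)).continuous.continuousOn)
      ⟨a', ha', b', hb', (le_min (by linarith) le_rfl).trans h'⟩
      (pert_cover hτ hM hp hS ha hb hab hx h)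
    exact ⟨n + 1, n.succ_pos, by rwa [Function.iterate_succ, Set.image_comp]⟩

include hτ1 in
theorem pert_transitive
    (hc : ∀ x y : I, Relation.TransGen (fun a b : I => |p a - b| < 3 * τ) x y) :
    IsTransitiveMap (pert p τ (freq τ M)) := by
  intro U V hU _ ⟨x, hx⟩ ⟨v, hv⟩
  have hN : 0 < freq τ M := by unfold freq; positivity
  obtain ⟨ε, hε, hball⟩ := Metric.isOpen_iff.1 hU x hx
  obtain ⟨y, hy, hyx⟩ : ∃ y ∈ Metric.ball x ε, y ≠ x := by
    have : Metric.ball x ε ∈ 𝓝[≠] x := mem_nhdsWithin_of_mem_nhds (Metric.ball_mem_nhds x hε)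
    obtain ⟨y, h1, h2⟩ := Filter.nonempty_of_mem (Filter.inter_mem this self_mem_nhdsWithin)
    exact ⟨y, h1, h2⟩
  have hsub : Set.uIcc x y ⊆ U := fun z hz => hball (by
    rw [Metric.mem_ball] at hy ⊢
    refine lt_of_le_of_lt ?_ hy
    rw [Subtype.dist_eq, Subtype.dist_eq, Real.dist_eq, Real.dist_eq]
    have hz' : (z : ℝ) ∈ Set.uIcc (x : ℝ) y := by
      rcases Set.mem_uIcc.1 hz with h | h
      · exact Set.mem_uIcc.2 (Or.inl h)
      · exact Set.mem_uIcc.2 (Or.inr h)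
    exact Set.abs_sub_left_of_mem_uIcc hz')
  obtain ⟨a, ha, b, hb, hab⟩ : ∃ a ∈ Set.uIcc x y, ∃ b ∈ Set.uIcc x y, a < b := by
    rcases lt_or_gt_of_ne hyx with h | h
    · exact ⟨y, Set.right_mem_uIcc, x, Set.left_mem_uIcc, h⟩
    · exact ⟨x, Set.left_mem_uIcc, y, Set.right_mem_uIcc, h⟩
  have hS : IsPreconnected (Set.uIcc x y) := isPreconnected_uIcc
  have hab' : (0 : ℝ) < b - a := sub_pos.2 hab
  obtain ⟨n, hn⟩ := pow_unbounded_of_one_lt (2 / freq τ M / ((b : ℝ) - a)) one_lt_two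
  rw [div_lt_iff₀ hab'] at hn
  obtain ⟨a', ha', b', hb', -, h'⟩ := pert_iterate_expand hτ hτ1 hM hp hS ha hb hab.le n
  rw [min_eq_right hn.le] at h'
  obtain ⟨m, hm, hv'⟩ := pert_follow_chain hτ hτ1 hM hp (hc a' v)
    (hS.image _ ((pert p τ (freq τ M)).continuous.iterate n).continuousOn)
    ⟨a', ha', b', hb', h'⟩ ha'
  rw [← Set.image_comp, ← Function.iterate_add] at hv'
  obtain ⟨u, hu, rfl⟩ := hv'
  exact ⟨m + n, by omega, u, hsub hu, hv⟩

end

/-! ### Chains and Lipschitz approximation -/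

/-- A transitive map is chain transitive: follow an orbit from near `g x` to near `y`. -/
lemma IsTransitiveMap.chain {g : C(I, I)} (hg : IsTransitiveMap g) {δ : ℝ} (hδ : 0 < δ) (x y : I) :
    Relation.TransGen (fun a b : I => |(g a : ℝ) - b| < δ) x y := by
  obtain ⟨n, hn, u, hu, hv⟩ := hg (Metric.ball (g x) δ) (Metric.ball y δ) Metric.isOpen_ball
    Metric.isOpen_ball ⟨_, Metric.mem_ball_self hδ⟩ ⟨_, Metric.mem_ball_self hδ⟩
  obtain ⟨m, rfl⟩ : ∃ m, n = m + 1 := ⟨n - 1, by omega⟩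
  have h1 : ∀ k : ℕ, Relation.TransGen (fun a b : I => |(g a : ℝ) - b| < δ) x (g^[k] u) := by
    intro k
    induction k with
    | zero =>
      rw [Metric.mem_ball', Subtype.dist_eq, Real.dist_eq] at hu
      exact .single hu
    | succ k ih =>
      refine ih.tail ?_
      rw [Function.iterate_succ_apply']
      simpa using hδ
  refine (h1 m).tail ?_
  rwa [Set.mem_preimage, Function.iterate_succ_apply', Metric.mem_ball, Subtype.dist_eq,
    Real.dist_eq] at hv

lemma transSet_nonempty : TransSet.Nonempty :=
  ⟨_, pert_transitive (p := 0) (τ := 1) (M := 0) one_pos le_rfl le_rfl (by simp) fun x y =>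
    .single (by
      have h0 := y.2.1
      have h1 := y.2.2
      rw [abs_lt]
      constructor <;> simp only [ContinuousMap.zero_apply] <;> linarith)⟩

/-- The inclusion of `C(I, I)` into the vector space `C(I, ℝ)`. -/
def toReal (f : C(I, I)) : C(I, ℝ) := (⟨Subtype.val, continuous_subtype_val⟩ : C(I, ℝ)).comp f

lemma toReal_continuous : Continuous toReal := ContinuousMap.continuous_postcomp _

lemma exists_lipschitz_near (f : C(I, ℝ)) {ε : ℝ} (hε : 0 < ε) :
    ∃ (p : C(I, ℝ)) (M : ℝ), dist p f < ε ∧ 0 ≤ M ∧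
      ∀ x y : I, |p x - p y| ≤ M * |(x : ℝ) - y| := by
  obtain ⟨q, hq⟩ := exists_polynomial_near_continuousMap 0 1 f ε hε
  have hq1 : ContDiff ℝ 1 fun x : ℝ => q.eval x := by
    simpa using q.contDiff_aeval (𝕜 := ℝ) (R := ℝ) 1
  obtain ⟨K, hK⟩ := hq1.contDiffOn.exists_lipschitzOnWith one_ne_zero
    (convex_Icc (0 : ℝ) 1) isCompact_Icc
  refine ⟨q.toContinuousMapOn _, K, by rwa [dist_eq_norm], K.2, fun x y => ?_⟩
  have := hK.dist_le_mul x x.2 y y.2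
  simpa [Real.dist_eq] using this

/-- A map close to `f`, on the scale of the distance from `f` to the transitive maps, inherits
chains from a transitive map. -/
lemma chain_of_near {f : C(I, I)} (hf : 0 < Metric.infDist f TransSet) {p : C(I, ℝ)}
    (hp : dist p (toReal f) < Metric.infDist f TransSet) (x y : I) :
    Relation.TransGen (fun a b : I => |p a - b| < 3 * Metric.infDist f TransSet) x y := by
  obtain ⟨g, hg, hfg⟩ := (Metric.infDist_lt_iff transSet_nonempty (x := f)
    (r := 3 / 2 * Metric.infDist f TransSet)).1 (by linarith)
  set τ := Metric.infDist f TransSet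
  refine Relation.TransGen.mono (fun a b hab => ?_) _ _ (hg.chain (half_pos hf) x y)
  have h1 : |p a - (f a : ℝ)| < τ := (ContinuousMap.dist_apply_le_dist (f := p) a).trans_lt hp
  have h2 : |(f a : ℝ) - g a| < 3 / 2 * τ :=
    (ContinuousMap.dist_apply_le_dist (f := f) (g := g) a).trans_lt hfg
  rw [abs_lt] at *
  constructor <;> linarith

lemma infDist_le_one (f : C(I, I)) : Metric.infDist f TransSet ≤ 1 := by
  obtain ⟨g, hg⟩ := transSet_nonempty
  refine (Metric.infDist_le_dist_of_mem hg).trans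
    ((ContinuousMap.dist_le zero_le_one).2 fun x => ?_)
  rw [Subtype.dist_eq, Real.dist_eq, abs_le]
  constructor <;> linarith [(f x).2.1, (f x).2.2, (g x).2.1, (g x).2.2]

lemma dist_pert_le {f : C(I, I)} {p : C(I, ℝ)} {τ : ℝ} (N : ℝ) (hτ : 0 ≤ τ)
    (hp : dist p (toReal f) ≤ τ) : dist (pert p τ N) f ≤ 5 * τ := by
  refine (ContinuousMap.dist_le (by positivity)).2 fun x => ?_
  have h1 : |p x - (f x : ℝ)| ≤ τ := (ContinuousMap.dist_apply_le_dist (f := p) x).trans hp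
  have h2 : |tri (zig p τ N x) - tri (f x)| ≤ |zig p τ N x - f x| := tri_lip _ _
  rw [tri_of_mem (f x).2] at h2
  refine h2.trans ?_
  have h3 := tri_mem (N * x)
  unfold zig
  rw [abs_le] at *
  constructor <;> nlinarith [h3.1, h3.2]

lemma pert_continuous {A : Type*} [TopologicalSpace A] {p : A → C(I, ℝ)} {τ N : A → ℝ}
    (hp : Continuous p) (hτ : Continuous τ) (hN : Continuous N) :
    Continuous fun a => pert (p a) (τ a) (N a) := by
  refine ContinuousMap.continuous_of_continuous_uncurry _ (Continuous.subtype_mk ?_ _)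
  have := tri_continuous
  change Continuous fun q : A × I =>
    tri (p q.1 q.2 + 4 * τ q.1 * (2 * tri (N q.1 * q.2) - 1))
  fun_prop

/-! ### The retraction -/

/-- Off the closure, a continuous choice of transitive maps, whose distance to `f` is controlled
by the distance from `f` to the transitive maps. -/
lemma exists_selection : ∃ G : {f : C(I, I) // 0 < Metric.infDist f TransSet} → C(I, I),
    Continuous G ∧ ∀ f, G f ∈ TransSet ∧ dist (G f) f ≤ 5 * Metric.infDist f.1 TransSet := by
  let Ω := {f : C(I, I) // 0 < Metric.infDist f TransSet}
  -- the approximating map and its Lipschitz constant together range over a convex set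
  let S : Ω → Set (C(I, ℝ) × ℝ) := fun f => {q |
    dist q.1 (toReal f.1) < Metric.infDist f.1 TransSet ∧
    0 ≤ q.2 ∧ ∀ x y : I, |q.1 x - q.1 y| ≤ q.2 * |(x : ℝ) - y|}
  have hconv : ∀ f, Convex ℝ (S f) := by
    rintro f ⟨p, M⟩ ⟨h1, h2, h3⟩ ⟨p', M'⟩ ⟨h1', h2', h3'⟩ a b ha hb hab
    refine ⟨convex_ball (toReal f.1) _ h1 h1' ha hb hab, ?_, fun x y => ?_⟩
    · simp only [Prod.smul_mk, Prod.mk_add_mk, smul_eq_mul]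
      dsimp only at h2 h2'
      positivity
    · have e1 := mul_le_mul_of_nonneg_left (h3 x y) ha
      have e2 := mul_le_mul_of_nonneg_left (h3' x y) hb
      have e3 := abs_add_le (a * (p x - p y)) (b * (p' x - p' y))
      rw [abs_mul, abs_mul, abs_of_nonneg ha, abs_of_nonneg hb] at e3
      simp only [Prod.smul_mk, Prod.mk_add_mk, smul_eq_mul, ContinuousMap.add_apply,
        ContinuousMap.smul_apply]
      rw [show a * p x + b * p' x - (a * p y + b * p' y) =
        a * (p x - p y) + b * (p' x - p' y) by ring]
      refine e3.trans ((add_le_add e1 e2).trans (le_of_eq ?_))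
      ring
  have hcont : Continuous fun f : Ω => Metric.infDist f.1 TransSet :=
    (Metric.continuous_infDist_pt _).comp continuous_subtype_val
  obtain ⟨g, hg⟩ := exists_continuous_forall_mem_convex_of_local_const hconv fun f => by
    obtain ⟨p, M, h1, h2, h3⟩ := exists_lipschitz_near (toReal f.1) f.2
    refine ⟨(p, M), ?_⟩
    have : ∀ᶠ f' : Ω in 𝓝 f, dist p (toReal f'.1) < Metric.infDist f'.1 TransSet :=
      (continuous_const.dist (toReal_continuous.comp continuous_subtype_val)).continuousAt.eventually_lt
        hcont.continuousAt h1
    filter_upwards [this] with f' hf'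
    exact ⟨hf', h2, h3⟩
  refine ⟨fun f => pert (g f).1 (Metric.infDist f.1 TransSet)
    (freq (Metric.infDist f.1 TransSet) (g f).2), ?_, fun f => ⟨?_, ?_⟩⟩
  · refine pert_continuous (by fun_prop) hcont ?_
    unfold freq
    exact Continuous.div (by fun_prop) hcont fun f => f.2.ne'
  · exact pert_transitive f.2 (infDist_le_one _) (hg f).2.1 (hg f).2.2
      (chain_of_near f.2 (hg f).1)
  · exact dist_pert_le _ f.2.le (hg f).1.le

theorem exists_retraction : ∃ R : C(I, I) → C(I, I), Continuous R ∧
    (∀ f, R f ∈ closure TransSet) ∧ ∀ f ∈ closure TransSet, R f = f := by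
  classical
  obtain ⟨G, hG, hGT⟩ := exists_selection
  let R : C(I, I) → C(I, I) := fun f =>
    if h : 0 < Metric.infDist f TransSet then G ⟨f, h⟩ else f
  have hR0 : ∀ f (_ : f ∈ closure TransSet), R f = f := fun f hf =>
    dif_neg ((Metric.mem_closure_iff_infDist_zero transSet_nonempty).1 hf).le.not_gt
  have hR1 : ∀ f (h : 0 < Metric.infDist f TransSet), R f = G ⟨f, h⟩ := fun f h => dif_pos h
  have hdist : ∀ f, dist (R f) f ≤ 5 * Metric.infDist f TransSet := by
    intro f
    by_cases h : 0 < Metric.infDist f TransSet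
    · rw [hR1 f h]; exact (hGT _).2
    · simp only [R, dif_neg h, dist_self]
      exact mul_nonneg (by norm_num) Metric.infDist_nonneg
  have hmem : ∀ f, ¬ 0 < Metric.infDist f TransSet → f ∈ closure TransSet := fun f h =>
    (Metric.mem_closure_iff_infDist_zero transSet_nonempty).2
      (le_antisymm (not_lt.1 h) Metric.infDist_nonneg)
  refine ⟨R, continuous_iff_continuousAt.2 fun f => ?_, fun f => ?_, hR0⟩
  · by_cases h : 0 < Metric.infDist f TransSet
    · have hopen : IsOpen {f : C(I, I) | 0 < Metric.infDist f TransSet} :=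
        isOpen_lt continuous_const (Metric.continuous_infDist_pt _)
      refine ContinuousOn.continuousAt ?_ (hopen.mem_nhds h)
      rw [continuousOn_iff_continuous_domRestrict]
      refine hG.congr fun f' => ?_
      exact (hR1 f'.1 f'.2).symm
    · have hf := hmem f h
      rw [ContinuousAt, hR0 f hf]
      have hz := (Metric.mem_closure_iff_infDist_zero transSet_nonempty).1 hf
      rw [tendsto_iff_dist_tendsto_zero]
      have hlim : Filter.Tendsto (fun f' => 5 * Metric.infDist f' TransSet + dist f' f) (𝓝 f)
          (𝓝 0) := by
        have : Continuous fun f' : C(I, I) => 5 * Metric.infDist f' TransSet + dist f' f :=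
          ((Metric.continuous_infDist_pt _).const_mul 5).add (by fun_prop)
        have := this.tendsto f
        rwa [hz, dist_self, mul_zero, add_zero] at this
      exact squeeze_zero (fun _ => dist_nonneg)
        (fun f' => (dist_triangle _ f' _).trans (add_le_add_left (hdist f') _)) hlim
  · by_cases h : 0 < Metric.infDist f TransSet
    · rw [hR1 f h]; exact subset_closure (hGT _).1
    · rw [hR0 f (hmem f h)]; exact hmem f h

theorem closure_transSet_is_absolute_retract :
    ∀ (Z : Type) [MetricSpace Z] (e : ↥(closure TransSet) → Z), IsClosedEmbedding e →
      ∃ r : Z → ↥(closure TransSet), Continuous r ∧ ∀ x : ↥(closure TransSet), r (e x) = x := by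
  intro Z _ e he
  obtain ⟨R, hR, hRmem, hRfix⟩ := exists_retraction
  -- Tietze on `Z × I`, then currying, extends `e⁻¹` to a map `Z → C(I, I)`
  have hcl : IsClosedEmbedding (Prod.map e (id : I → I)) := he.prodMap .id
  obtain ⟨F, hF⟩ := ContinuousMap.exists_extension' hcl
    (⟨fun q => q.1.1 q.2, by fun_prop⟩ : C(↥(closure TransSet) × I, I))
  refine ⟨fun z => ⟨R (F.curry z), hRmem _⟩, (hR.comp F.curry.continuous).subtype_mk _,
    fun x => Subtype.ext ?_⟩
  have : F.curry (e x) = x.1 := by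
    ext1 t
    exact congrFun hF (x, t)
  change R (F.curry (e x)) = x.1
  rw [this, hRfix _ x.2]
end
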